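/- Let $n \ge 3$, $F > 0$, let $\sigma$ denote the surface measure on $\mathbb{S}^{n-2} \subset \mathbb{R}^{n-1}$ (normalized so that $\int_{\mathbb{R}^{n-1}} f(Y)\, dY = \int_0^\infty \int_{\mathbb{S}^{n-2}} f(r\omega)\, r^{n-2}\, d\sigma(\omega)\, dr$), and let $\alpha : \mathbb{S}^{n-2} \to \mathbb{R}$ be continuous with $c_1 \le \alpha(\omega) \le c_2$ for some $c_2 \ge c_1 > 0$. Define, for $X \in \mathbb{R}$, $Y \in \mathbb{R}^{n-1}\setminus\{0\}$, $\hat Y = Y/|Y|$: $\tilde K(X, Y) = e^{-FX}\, |Y|^{1-n} \Big( \chi_{\alpha(\hat Y)}\big(\tfrac{X - \alpha(\hat Y)|Y|^2}{|Y|}\big) + \chi_{\alpha(-\hat Y)}\big(\tfrac{-X + \alpha(-\hat Y)|Y|^2}{|Y|}\big) \Big)$ with $\chi_a(s) = e^{-F s^2/(2a)}$. Then $\tilde K$ is integrable on $\mathbb{R} \times \mathbb{R}^{n-1}$, its Fourier transform $\mathcal{F}\tilde K(\xi, \eta) = \int e^{-i(\xi X + \eta\cdot Y)} \tilde K(X,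 Y)\, dX\, dY$ is real and positive, and there exists $c' > 0$ such that for all $(\xi, \eta) \in \mathbb{R} \times \mathbb{R}^{n-1}$, $\mathcal{F}\tilde K(\xi, \eta) \;\ge\; \frac{c'}{\sqrt{1 + \xi^2 + |\eta|^2}}.$ -/

import Mathlib

open MeasureTheory Set
open scoped RealInnerProductSpace

/-!
The kernel is the symmetrization in `Y` of `e^{-FX} |Y|^{1-n} χ_α((X - α|Y|²)/|Y|)` with `α = α(Ŷ)`,
and completing the square shows that this half is a Gaussian in `X`; its Fourier transform in `X`
is `|Y|^{2-n}` times a Gaussian in `|Y|`. In polar coordinates the power of `|Y|` cancels against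
the Jacobian, and the reflection `Y ↦ -Y` turns the phase into a cosine, so the integral over the
radius is a Gaussian cosine transform. The symbol is therefore the positive number
`2π (ξ² + F²)^{-1/2} ∫ exp(-F ⟨η, ω⟩² / (2 α(ω) (ξ² + F²))) dσ(ω)`.

The exponent is at least `-1` on the equatorial slab `|⟨η, ω⟩| ≤ s`, where `s` is a fixed multiple
of `(ξ² + F²)^{1/2}`. In dimension at least two the cone over that slab contains a box of volume
comparable to `s / (s + |η|)`, which gives the lower bound.
-/

open Metric Module Measure
open scoped Pointwise

section PolarCoordinates

variable {E V : Type*} [NormedAddCommGroup E] [NormedSpace ℝ E]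

lemma inv_norm_smul_mem_sphere {Y : E} (hY : Y ≠ 0) : ‖Y‖⁻¹ • Y ∈ sphere (0 : E) 1 := by
  simp [norm_smul, hY]

lemma smul_homeomorphUnitSphereProd (Y : ({0}ᶜ : Set E)) :
    ((homeomorphUnitSphereProd E Y).2 : ℝ) • ((homeomorphUnitSphereProd E Y).1 : E) = Y :=
  congrArg Subtype.val ((homeomorphUnitSphereProd E).symm_apply_apply Y)

variable [MeasurableSpace E] [BorelSpace E]

lemma measurable_comp_inv_norm_smul {β : Type*} [MeasurableSpace β] {f : E → β}
    (hf : Measurable ((sphere (0 : E) 1).domRestrict f)) :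
    Measurable fun Y : E ↦ f (‖Y‖⁻¹ • Y) := by
  have hdir : Measurable fun Y : {Y : E | Y ≠ 0} ↦
      (⟨‖(Y : E)‖⁻¹ • (Y : E), inv_norm_smul_mem_sphere Y.2⟩ : sphere (0 : E) 1) :=
    Measurable.subtype_mk (by fun_prop)
  exact measurable_of_measurable_on_compl_singleton 0 (hf.comp hdir)

variable [FiniteDimensional ℝ E] [Nontrivial E] (μ : Measure E)

lemma measure_Ioo_smul_le_toSphere {s : Set (sphere (0 : E) 1)} (hs : MeasurableSet s) :
    μ (Ioo (0 : ℝ) 1 • ((↑) '' s)) ≤ μ.toSphere s := by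
  rw [μ.toSphere_apply' hs]
  exact le_mul_of_one_le_left' (by exact_mod_cast (finrank_pos : 0 < finrank ℝ E))

variable [NormedAddCommGroup V]

lemma integrable_polar_iff [μ.IsAddHaarMeasure] {f : E → V} :
    Integrable (fun p : sphere (0 : E) 1 × Ioi (0 : ℝ) ↦ f ((p.2 : ℝ) • (p.1 : E)))
      (μ.toSphere.prod (volumeIoiPow (finrank ℝ E - 1))) ↔ Integrable f μ := by
  rw [← μ.measurePreserving_homeomorphUnitSphereProd.integrable_comp_emb
      (Homeomorph.measurableEmbedding _), Function.comp_def]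
  simp only [smul_homeomorphUnitSphereProd]
  rw [← Function.comp_def f, ← integrableOn_iff_comap_subtypeVal (measurableSet_singleton _).compl,
    IntegrableOn, restrict_compl_singleton]

variable [NormedSpace ℝ V]

lemma integral_volumeIoiPow (n : ℕ) (f : ℝ → V) :
    ∫ r : Ioi (0 : ℝ), f r ∂volumeIoiPow n = ∫ r in Ioi (0 : ℝ), r ^ n • f r := by
  simp only [volumeIoiPow, ENNReal.ofReal]
  rw [integral_withDensity_eq_integral_smul (by fun_prop),
    integral_subtype_comap measurableSet_Ioi fun r ↦ Real.toNNReal (r ^ n) • f r]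
  refine setIntegral_congr_fun measurableSet_Ioi fun r hr ↦ ?_
  rw [NNReal.smul_def, Real.coe_toNNReal _ (pow_nonneg (mem_Ioi.1 hr).le _)]

lemma integrable_volumeIoiPow_iff {n : ℕ} {f : ℝ → V} :
    Integrable (fun r : Ioi (0 : ℝ) ↦ f r) (volumeIoiPow n) ↔
      IntegrableOn (fun r ↦ r ^ n • f r) (Ioi 0) := by
  simp only [volumeIoiPow, ENNReal.ofReal]
  rw [integrable_withDensity_iff_integrable_smul (by fun_prop),
    integrableOn_iff_comap_subtypeVal measurableSet_Ioi]
  refine integrable_congr (.of_forall fun r ↦ ?_)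
  simp [NNReal.smul_def, Real.coe_toNNReal _ (pow_nonneg (mem_Ioi.1 r.2).le _)]

lemma integral_eq_integral_polar [μ.IsAddHaarMeasure] (f : E → V) :
    ∫ Y, f Y ∂μ = ∫ p : sphere (0 : E) 1 × Ioi (0 : ℝ), f ((p.2 : ℝ) • (p.1 : E))
      ∂μ.toSphere.prod (volumeIoiPow (finrank ℝ E - 1)) := by
  rw [← μ.measurePreserving_homeomorphUnitSphereProd.integral_comp
    (Homeomorph.measurableEmbedding _)]
  simp only [smul_homeomorphUnitSphereProd]
  rw [integral_subtype_comap (measurableSet_singleton _).compl f, restrict_compl_singleton]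

end PolarCoordinates

section SlabBox

/-- The box `[0, δ r] × [r, 2r] × ⋯ × [r, 2r]`, the short side being the `i₀`-th one. For
`r = 1 / (2 card ι)` and `δ ≤ 1` it lies in the unit ball, inside the cone over a slab of the
sphere, and so bounds the area of that slab from below. -/
def slabBox {ι : Type*} [DecidableEq ι] (i₀ : ι) (r δ : ℝ) : Set (ι → ℝ) :=
  univ.pi (Function.update (fun _ ↦ Icc r (2 * r)) i₀ (Icc 0 (δ * r)))

variable {ι : Type*} [DecidableEq ι] {i i₀ : ι} {r δ : ℝ}

lemma apply_self_mem_Icc_of_mem_slabBox {x : ι → ℝ} (hx : x ∈ slabBox i₀ r δ) :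
    x i₀ ∈ Icc 0 (δ * r) := by
  simpa using hx i₀ (mem_univ _)

lemma apply_mem_Icc_of_mem_slabBox {x : ι → ℝ} (hx : x ∈ slabBox i₀ r δ) (hi : i ≠ i₀) :
    x i ∈ Icc r (2 * r) := by
  simpa [hi] using hx i (mem_univ _)

variable [Fintype ι]

lemma volume_slabBox (hr : 0 ≤ r) :
    volume (slabBox i₀ r δ) = ENNReal.ofReal (δ * r ^ Fintype.card ι) := by
  have hcard : Fintype.card ι = 1 + (Finset.univ \ {i₀}).card := by
    rw [← Finset.compl_eq_univ_sdiff, Finset.card_compl, Finset.card_singleton]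
    have := Fintype.card_pos_iff.2 ⟨i₀⟩
    omega
  have hupd (i : ι) : volume (Function.update (fun _ ↦ Icc r (2 * r)) i₀ (Icc 0 (δ * r)) i) =
      Function.update (fun _ ↦ ENNReal.ofReal r) i₀ (ENNReal.ofReal (δ * r)) i := by
    rcases eq_or_ne i i₀ with rfl | h
    · simp
    · simp [h, two_mul]
  rw [slabBox, volume_pi_pi]
  simp only [hupd]
  rw [Finset.prod_update_of_mem (Finset.mem_univ _), Finset.prod_const, ← ENNReal.ofReal_pow hr,
    ← ENNReal.ofReal_mul' (pow_nonneg hr _), hcard, pow_add]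
  congr 1
  ring

variable {y : EuclideanSpace ℝ ι}

lemma le_norm_of_mem_slabBox [Nontrivial ι] (hr : 0 ≤ r) (hy : y.ofLp ∈ slabBox i₀ r δ) :
    r ≤ ‖y‖ := by
  obtain ⟨i, hi⟩ := exists_ne i₀
  have hyi := (apply_mem_Icc_of_mem_slabBox hy hi).1
  calc r ≤ y i := hyi
    _ = ‖y i‖ := (Real.norm_of_nonneg (hr.trans hyi)).symm
    _ ≤ ‖y‖ := PiLp.norm_apply_le y i

lemma norm_sq_le_of_mem_slabBox (hr : 0 ≤ r) (hδ : δ ≤ 1) (hy : y.ofLp ∈ slabBox i₀ r δ) :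
    ‖y‖ ^ 2 ≤ Fintype.card ι * (2 * r) ^ 2 := by
  have hcoord (i : ι) : y i ^ 2 ≤ (2 * r) ^ 2 := by
    rcases eq_or_ne i i₀ with rfl | hi
    · have h := apply_self_mem_Icc_of_mem_slabBox hy
      exact pow_le_pow_left₀ h.1 (h.2.trans (by nlinarith)) 2
    · have h := apply_mem_Icc_of_mem_slabBox hy hi
      exact pow_le_pow_left₀ (hr.trans h.1) h.2 2
  calc ‖y‖ ^ 2 = ∑ i, y i ^ 2 := EuclideanSpace.real_norm_sq_eq y
    _ ≤ ∑ _i : ι, (2 * r) ^ 2 := Finset.sum_le_sum fun i _ ↦ hcoord i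
    _ = Fintype.card ι * (2 * r) ^ 2 := by simp

lemma norm_lt_one_of_mem_slabBox [Nontrivial ι] (hδ : δ ≤ 1)
    (hy : y.ofLp ∈ slabBox i₀ (2 * Fintype.card ι : ℝ)⁻¹ δ) : ‖y‖ < 1 := by
  have hcard : (1 : ℝ) < Fintype.card ι := by exact_mod_cast Fintype.one_lt_card
  refine lt_of_pow_lt_pow_left₀ 2 zero_le_one ?_
  calc ‖y‖ ^ 2 ≤ Fintype.card ι * (2 * (2 * Fintype.card ι : ℝ)⁻¹) ^ 2 :=
        norm_sq_le_of_mem_slabBox (by positivity) hδ hy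
    _ = (Fintype.card ι : ℝ)⁻¹ := by field_simp
    _ < 1 ^ 2 := by rw [one_pow]; exact inv_lt_one_of_one_lt₀ hcard

end SlabBox

section SphereSlab

lemma exists_norm_eq_one_and_eq_norm_smul {E : Type*} [NormedAddCommGroup E] [NormedSpace ℝ E]
    [Nontrivial E] (η : E) : ∃ e : E, ‖e‖ = 1 ∧ η = ‖η‖ • e := by
  rcases eq_or_ne η 0 with rfl | hη
  · obtain ⟨e, he⟩ := exists_norm_eq E zero_le_one
    exact ⟨e, he, by simp⟩
  · exact ⟨‖η‖⁻¹ • η, by simp [norm_smul, hη], by simp [smul_smul, hη]⟩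

variable {E : Type*} [NormedAddCommGroup E] [InnerProductSpace ℝ E]

lemma preimage_slabBox_subset_cone {ι : Type*} [Fintype ι] [DecidableEq ι] [Nontrivial ι]
    (b : OrthonormalBasis ι ℝ E) (i₀ : ι) {δ : ℝ} (hδ₀ : 0 ≤ δ) (hδ₁ : δ ≤ 1) :
    (fun Y : E ↦ (b.repr Y).ofLp) ⁻¹' slabBox i₀ (2 * Fintype.card ι : ℝ)⁻¹ δ ⊆
      Ioo (0 : ℝ) 1 • (Subtype.val '' {ω : sphere (0 : E) 1 | |⟪b i₀, (ω : E)⟫| ≤ δ}) := by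
  intro Y hY
  set r : ℝ := (2 * Fintype.card ι : ℝ)⁻¹
  have hr : 0 < r := by positivity
  have hrY : r ≤ ‖Y‖ := by simpa using le_norm_of_mem_slabBox hr.le hY
  have hY₁ : ‖Y‖ < 1 := by simpa using norm_lt_one_of_mem_slabBox hδ₁ hY
  have hY₀ : 0 < ‖Y‖ := hr.trans_le hrY
  have hcoord : ⟪b i₀, Y⟫ ∈ Icc 0 (δ * r) := by
    simpa [b.repr_apply_apply] using apply_self_mem_Icc_of_mem_slabBox hY
  have hslab : |⟪b i₀, ‖Y‖⁻¹ • Y⟫| ≤ δ := by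
    rw [inner_smul_right, abs_of_nonneg (mul_nonneg (by positivity) hcoord.1),
      inv_mul_le_iff₀ hY₀, mul_comm]
    exact hcoord.2.trans (by gcongr)
  exact ⟨‖Y‖, ⟨hY₀, hY₁⟩, ‖Y‖⁻¹ • Y, ⟨⟨‖Y‖⁻¹ • Y, by simp [norm_smul, hY₀.ne']⟩, hslab, rfl⟩,
    by simp [smul_smul, hY₀.ne']⟩

variable [FiniteDimensional ℝ E]

lemma exists_orthonormalBasis_apply_eq {ι : Type*} [Fintype ι] (hι : finrank ℝ E = Fintype.card ι)
    (i₀ : ι) {e : E} (he : ‖e‖ = 1) : ∃ b : OrthonormalBasis ι ℝ E, b i₀ = e := by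
  have horth : Orthonormal ℝ (({i₀} : Set ι).domRestrict fun _ ↦ e) :=
    ⟨fun _ ↦ he, fun _ _ hij ↦ absurd (Subsingleton.elim _ _) hij⟩
  obtain ⟨b, hb⟩ := horth.exists_orthonormalBasis_extension_of_card_eq hι
  exact ⟨b, hb i₀ rfl⟩

variable [MeasurableSpace E] [BorelSpace E]

lemma mul_le_measureReal_toSphere_slab (hE : 2 ≤ finrank ℝ E) {e : E} (he : ‖e‖ = 1) {δ : ℝ}
    (hδ₀ : 0 ≤ δ) (hδ₁ : δ ≤ 1) :
    δ * (2 * finrank ℝ E : ℝ)⁻¹ ^ finrank ℝ E ≤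
      (volume : Measure E).toSphere.real {ω | |⟪e, (ω : E)⟫| ≤ δ} := by
  have : Nontrivial (Fin (finrank ℝ E)) := Fin.nontrivial_iff_two_le.2 hE
  have : Nontrivial E := nontrivial_of_finrank_pos (R := ℝ) (by lia)
  let i₀ : Fin (finrank ℝ E) := ⟨0, by lia⟩
  obtain ⟨b, rfl⟩ := exists_orthonormalBasis_apply_eq (Fintype.card_fin _).symm i₀ he
  have hrepr : MeasurePreserving fun Y : E ↦ (b.repr Y).ofLp :=
    (PiLp.volume_preserving_ofLp _).comp b.measurePreserving_repr
  have hbox : MeasurableSet (slabBox i₀ (2 * finrank ℝ E : ℝ)⁻¹ δ) := by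
    refine .univ_pi fun i ↦ ?_
    rcases eq_or_ne i i₀ with rfl | h <;> simp [*]
  have hslab : MeasurableSet {ω : sphere (0 : E) 1 | |⟪b i₀, (ω : E)⟫| ≤ δ} :=
    measurableSet_le (by fun_prop) (by fun_prop)
  refine (ENNReal.ofReal_le_iff_le_toReal (measure_ne_top _ _)).1 ?_
  calc ENNReal.ofReal (δ * (2 * finrank ℝ E : ℝ)⁻¹ ^ finrank ℝ E)
      = volume (slabBox i₀ (2 * finrank ℝ E : ℝ)⁻¹ δ) := by
        rw [volume_slabBox (by positivity), Fintype.card_fin]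
    _ = volume ((fun Y : E ↦ (b.repr Y).ofLp) ⁻¹' slabBox i₀ (2 * finrank ℝ E : ℝ)⁻¹ δ) :=
        (hrepr.measure_preimage hbox.nullMeasurableSet).symm
    _ ≤ volume (Ioo (0 : ℝ) 1 •
          (Subtype.val '' {ω : sphere (0 : E) 1 | |⟪b i₀, (ω : E)⟫| ≤ δ})) := by
        refine measure_mono ?_
        simpa using preimage_slabBox_subset_cone b i₀ hδ₀ hδ₁
    _ ≤ _ := measure_Ioo_smul_le_toSphere _ hslab

lemma div_add_norm_mul_le_measureReal_toSphere_slab (hE : 2 ≤ finrank ℝ E) {s : ℝ} (hs : 0 < s)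
    (η : E) : s / (s + ‖η‖) * (2 * finrank ℝ E : ℝ)⁻¹ ^ finrank ℝ E ≤
      (volume : Measure E).toSphere.real {ω | |⟪η, (ω : E)⟫| ≤ s} := by
  have : Nontrivial E := nontrivial_of_finrank_pos (R := ℝ) (by lia)
  obtain ⟨e, he, hηe⟩ := exists_norm_eq_one_and_eq_norm_smul η
  have hδ₁ : s / (s + ‖η‖) ≤ 1 := div_le_one_of_le₀ (by linarith [norm_nonneg η]) (by positivity)
  have hηδ : ‖η‖ * (s / (s + ‖η‖)) ≤ s := by
    rw [mul_div_left_comm]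
    exact mul_le_of_le_one_right hs.le
      (div_le_one_of_le₀ (by linarith) (by positivity))
  refine (mul_le_measureReal_toSphere_slab hE he (by positivity) hδ₁).trans
    (measureReal_mono fun ω hω ↦ ?_)
  calc |⟪η, (ω : E)⟫| = ‖η‖ * |⟪e, (ω : E)⟫| := by
        conv_lhs => rw [hηe, real_inner_smul_left, abs_mul, abs_norm]
    _ ≤ ‖η‖ * (s / (s + ‖η‖)) := by gcongr; exact hω
    _ ≤ s := hηδ

lemma mul_le_integral_toSphere_exp_neg_inner_sq_div (hE : 2 ≤ finrank ℝ E)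
    {β : sphere (0 : E) 1 → ℝ} (hβ : Measurable β) {s : ℝ} (hs : 0 < s) (hsβ : ∀ ω, s ^ 2 ≤ β ω)
    (η : E) : Real.exp (-1) * (s / (s + ‖η‖) * (2 * finrank ℝ E : ℝ)⁻¹ ^ finrank ℝ E) ≤
      ∫ ω : sphere (0 : E) 1, Real.exp (-(⟪η, (ω : E)⟫ ^ 2 / β ω))
        ∂(volume : Measure E).toSphere := by
  have hβ₀ (ω) : 0 < β ω := (pow_pos hs 2).trans_le (hsβ ω)
  have hint : Integrable (fun ω : sphere (0 : E) 1 ↦ Real.exp (-(⟪η, (ω : E)⟫ ^ 2 / β ω)))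
      (volume : Measure E).toSphere := by
    refine .of_bound (Measurable.aestronglyMeasurable (by fun_prop)) 1 (.of_forall fun ω ↦ ?_)
    rw [Real.norm_of_nonneg (Real.exp_pos _).le, Real.exp_le_one_iff, neg_nonpos]
    exact div_nonneg (sq_nonneg _) (hβ₀ ω).le
  refine le_trans ?_ (mul_meas_ge_le_integral_of_nonneg
    (.of_forall fun ω ↦ (Real.exp_pos _).le) hint (Real.exp (-1)))
  gcongr
  refine (div_add_norm_mul_le_measureReal_toSphere_slab hE hs η).trans
    (measureReal_mono fun ω hω ↦ ?_)
  refine Real.exp_le_exp.2 (neg_le_neg ((div_le_one (hβ₀ ω)).2 ?_))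
  exact (sq_le_sq.2 (by rwa [abs_of_pos hs])).trans (hsβ ω)

lemma mul_sqrt_add_norm_le {E : Type*} [SeminormedAddCommGroup E] {q F : ℝ} (hq : 0 ≤ q)
    (hF : 0 ≤ F) (ξ : ℝ) (η : E) :
    q * √(ξ ^ 2 + F ^ 2) + ‖η‖ ≤ (q * (1 + F) + 1) * √(1 + ξ ^ 2 + ‖η‖ ^ 2) := by
  have hξ : √(ξ ^ 2 + F ^ 2) ≤ (1 + F) * √(1 + ξ ^ 2 + ‖η‖ ^ 2) := by
    refine Real.sqrt_le_iff.2 ⟨by positivity, ?_⟩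
    rw [mul_pow, Real.sq_sqrt (by positivity)]
    nlinarith [mul_nonneg hF (sq_nonneg ξ), mul_nonneg (sq_nonneg F) (sq_nonneg ξ),
      mul_nonneg (sq_nonneg (1 + F)) (sq_nonneg ‖η‖)]
  have hη : ‖η‖ ≤ √(1 + ξ ^ 2 + ‖η‖ ^ 2) := Real.le_sqrt_of_sq_le (by nlinarith [sq_nonneg ξ])
  linarith [mul_le_mul_of_nonneg_left hξ hq]

lemma exists_div_sqrt_le_mul_integral_toSphere (hE : 2 ≤ finrank ℝ E) {F c₁ : ℝ} (hF : 0 < F)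
    (hc₁ : 0 < c₁) {a : sphere (0 : E) 1 → ℝ} (ha : Measurable a) (hc₁a : ∀ ω, c₁ ≤ a ω) :
    ∃ c' : ℝ, 0 < c' ∧ ∀ (ξ : ℝ) (η : E), c' / √(1 + ξ ^ 2 + ‖η‖ ^ 2) ≤
      2 * Real.pi / √(ξ ^ 2 + F ^ 2) * ∫ ω : sphere (0 : E) 1,
        Real.exp (-(⟪η, (ω : E)⟫ ^ 2 / (2 * a ω * (ξ ^ 2 + F ^ 2) / F)))
          ∂(volume : Measure E).toSphere := by
  -- On the slab of half-width `q √(ξ² + F²)`, `c₁ ≤ a` makes the exponent at least `-1`.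
  obtain ⟨q, hq, hq_sq⟩ : ∃ q : ℝ, 0 < q ∧ q ^ 2 = 2 * c₁ / F :=
    ⟨√(2 * c₁ / F), by positivity, Real.sq_sqrt (by positivity)⟩
  obtain ⟨v, hv, hvE⟩ : ∃ v : ℝ, 0 < v ∧ v = (2 * finrank ℝ E : ℝ)⁻¹ ^ finrank ℝ E :=
    ⟨_, by positivity, rfl⟩
  refine ⟨2 * Real.pi * Real.exp (-1) * v * q / (q * (1 + F) + 1), by positivity, fun ξ η ↦ ?_⟩
  have hsβ (ω : sphere (0 : E) 1) :
      (q * √(ξ ^ 2 + F ^ 2)) ^ 2 ≤ 2 * a ω * (ξ ^ 2 + F ^ 2) / F := by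
    rw [mul_pow, hq_sq, Real.sq_sqrt (by positivity), div_mul_eq_mul_div]
    gcongr
    exact hc₁a ω
  calc 2 * Real.pi * Real.exp (-1) * v * q / (q * (1 + F) + 1) / √(1 + ξ ^ 2 + ‖η‖ ^ 2)
      = 2 * Real.pi * Real.exp (-1) * v * q / ((q * (1 + F) + 1) * √(1 + ξ ^ 2 + ‖η‖ ^ 2)) :=
        div_div _ _ _
    _ ≤ 2 * Real.pi * Real.exp (-1) * v * q / (q * √(ξ ^ 2 + F ^ 2) + ‖η‖) := by
        gcongr
        exact mul_sqrt_add_norm_le hq.le hF.le ξ η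
    _ = 2 * Real.pi / √(ξ ^ 2 + F ^ 2) * (Real.exp (-1) *
          (q * √(ξ ^ 2 + F ^ 2) / (q * √(ξ ^ 2 + F ^ 2) + ‖η‖) * v)) := by
        field_simp
    _ ≤ _ := by
        rw [hvE]
        gcongr
        exact mul_le_integral_toSphere_exp_neg_inner_sq_div hE (by fun_prop) (by positivity) hsβ η

end SphereSlab

section Oscillatory

lemma norm_cexp_neg_I_mul_ofReal (θ : ℝ) : ‖Complex.exp (-(Complex.I * θ))‖ = 1 := by
  simp [Complex.norm_exp]

lemma integrable_cexp_neg_I_mul_mul {β : Type*} [MeasurableSpace β] {μ : Measure β} {θ f : β → ℝ}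
    (hθ : AEMeasurable θ μ) (hf : Integrable f μ) :
    Integrable (fun x ↦ Complex.exp (-(Complex.I * θ x)) * (f x : ℂ)) μ :=
  hf.ofReal.bdd_mul (by fun_prop) (.of_forall fun x ↦ (norm_cexp_neg_I_mul_ofReal (θ x)).le)

lemma integral_cexp_neg_I_mul_mul_add_comp_neg {G : Type*} [AddGroup G] [MeasurableSpace G]
    [MeasurableNeg G] {μ : Measure G} [μ.IsNegInvariant] {θ f : G → ℝ} (hθ : Measurable θ)
    (hθ_neg : ∀ Y, θ (-Y) = -θ Y) (hf : Integrable f μ) :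
    ∫ Y, Complex.exp (-(Complex.I * θ Y)) * ((f Y + f (-Y) : ℝ) : ℂ) ∂μ =
      ((2 * ∫ Y, Real.cos (θ Y) * f Y ∂μ : ℝ) : ℂ) := by
  have hint := integrable_cexp_neg_I_mul_mul hθ.aemeasurable hf
  have hint_neg := integrable_cexp_neg_I_mul_mul hθ.neg.aemeasurable hf
  have hint_comp :
      Integrable (fun Y ↦ Complex.exp (-(Complex.I * θ Y)) * (f (-Y) : ℂ)) μ := by
    simpa [hθ_neg] using hint_neg.comp_neg
  have hreflect : ∫ Y, Complex.exp (-(Complex.I * θ Y)) * (f (-Y) : ℂ) ∂μ =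
      ∫ Y, Complex.exp (-(Complex.I * ((-θ) Y : ℝ))) * (f Y : ℂ) ∂μ := by
    rw [← integral_neg_eq_self]
    simp [hθ_neg]
  simp only [Complex.ofReal_add, mul_add]
  rw [integral_add hint hint_comp, hreflect, ← integral_add hint hint_neg, ← integral_const_mul,
    ← integral_complex_ofReal]
  refine integral_congr_ae (.of_forall fun Y ↦ ?_)
  have hcos := Complex.two_cos (θ Y : ℂ)
  simp only [Pi.neg_apply, Complex.ofReal_mul, Complex.ofReal_ofNat, Complex.ofReal_cos,
    Complex.ofReal_neg, ← mul_assoc, hcos, ← add_mul]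
  rw [add_comm]
  ring_nf

end Oscillatory

section Gaussian

variable {b : ℝ}

lemma integral_cexp_mul_gaussian (hb : 0 < b) (t : ℝ) :
    ∫ x : ℝ, Complex.exp (-(Complex.I * (t * x : ℝ))) * (Real.exp (-b * x ^ 2) : ℝ) =
      ((√(Real.pi / b) * Real.exp (-(t ^ 2 / (4 * b))) : ℝ) : ℂ) := by
  have hsqrt : (Real.pi / b : ℂ) ^ (1 / 2 : ℂ) = (√(Real.pi / b) : ℝ) := by
    rw [Real.sqrt_eq_rpow, Complex.ofReal_cpow (by positivity)]
    push_cast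
    rfl
  have hfourier := fourierIntegral_gaussian (b := (b : ℂ)) (by simpa using hb) (-(t : ℂ))
  rw [hsqrt] at hfourier
  convert hfourier using 1
  · congr 1 with x
    push_cast
    congr 2
    ring_nf
  · push_cast
    congr 2
    ring

lemma integral_cos_mul_gaussian (hb : 0 < b) (t : ℝ) :
    ∫ x : ℝ, Real.cos (t * x) * Real.exp (-b * x ^ 2) =
      √(Real.pi / b) * Real.exp (-(t ^ 2 / (4 * b))) := by
  have h := integral_cexp_neg_I_mul_mul_add_comp_neg (μ := volume) (θ := fun x ↦ t * x)
    (by fun_prop) (by simp) (integrable_exp_neg_mul_sq hb)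
  simp only [neg_sq, ← two_mul, Complex.ofReal_mul 2, mul_left_comm _ ((2 : ℝ) : ℂ)] at h
  rw [integral_const_mul, integral_cexp_mul_gaussian hb] at h
  exact_mod_cast mul_left_cancel₀ (by simp) h.symm

lemma integral_Ioi_cos_mul_gaussian (hb : 0 < b) (t : ℝ) :
    ∫ x in Ioi (0 : ℝ), Real.cos (t * x) * Real.exp (-b * x ^ 2) =
      √(Real.pi / b) / 2 * Real.exp (-(t ^ 2 / (4 * b))) := by
  have heven (x : ℝ) : Real.cos (t * |x|) = Real.cos (t * x) := by
    rw [← Real.cos_abs, abs_mul, abs_abs, ← abs_mul, Real.cos_abs]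
  have h := integral_comp_abs (f := fun x ↦ Real.cos (t * x) * Real.exp (-b * x ^ 2))
  simp only [heven, sq_abs, integral_cos_mul_gaussian hb] at h
  linarith

end Gaussian

section Kernel

/-- The Gaussian cutoff `χ_a(s) = e^{-F s² / (2a)}`. -/
noncomputable def gaussianCutoff (F a s : ℝ) : ℝ :=
  Real.exp (-(F * s ^ 2 / (2 * a)))

lemma gaussianCutoff_pos (F a s : ℝ) : 0 < gaussianCutoff F a s :=
  Real.exp_pos _

lemma exp_mul_gaussianCutoff (F X : ℝ) {a r : ℝ} (ha : a ≠ 0) (hr : r ≠ 0) :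
    Real.exp (-(F * X)) * gaussianCutoff F a ((X - a * r ^ 2) / r) =
      Real.exp (-(F * a * r ^ 2 / 2)) * Real.exp (-(F / (2 * a * r ^ 2)) * X ^ 2) := by
  rw [gaussianCutoff, ← Real.exp_add, ← Real.exp_add]
  congr 1
  field_simp
  ring

variable {E : Type*} [NormedAddCommGroup E] [InnerProductSpace ℝ E]

/-- The boundary kernel `K̃(X, Y)` of the conjugated normal operator, the space `E` standing for
`ℝ^{n-1}`, so that `|Y|^{1-n}` is `|Y|^{-dim E}`. -/
noncomputable def boundaryKernel (F : ℝ) (α : E → ℝ) (X : ℝ) (Y : E) : ℝ :=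
  Real.exp (-(F * X)) * (‖Y‖ ^ finrank ℝ E)⁻¹ *
    (gaussianCutoff F (α (‖Y‖⁻¹ • Y)) ((X - α (‖Y‖⁻¹ • Y) * ‖Y‖ ^ 2) / ‖Y‖) +
      gaussianCutoff F (α (-(‖Y‖⁻¹ • Y))) ((-X + α (-(‖Y‖⁻¹ • Y)) * ‖Y‖ ^ 2) / ‖Y‖))

/-- The summand of `boundaryKernel` with the cutoff in the direction `Ŷ`; the other one is its
reflection in `Y`. -/
noncomputable def halfKernel (F : ℝ) (α : E → ℝ) (X : ℝ) (Y : E) : ℝ :=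
  Real.exp (-(F * X)) * (‖Y‖ ^ finrank ℝ E)⁻¹ *
    gaussianCutoff F (α (‖Y‖⁻¹ • Y)) ((X - α (‖Y‖⁻¹ • Y) * ‖Y‖ ^ 2) / ‖Y‖)

/-- The Fourier transform of `halfKernel F α X Y` in `X` alone at the frequency `ξ`, for `Y ≠ 0` and
`α(Ŷ) > 0`. It is defined by its closed form, so that it makes sense for all `Y`. -/
noncomputable def partialSymbol (F : ℝ) (α : E → ℝ) (ξ : ℝ) (Y : E) : ℝ :=
  (‖Y‖ ^ (finrank ℝ E - 1))⁻¹ * √(2 * Real.pi * α (‖Y‖⁻¹ • Y) / F) *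
    Real.exp (-(α (‖Y‖⁻¹ • Y) * (ξ ^ 2 + F ^ 2) / (2 * F)) * ‖Y‖ ^ 2)

/-- The boundary principal symbol: the Fourier transform of `boundaryKernel F α` in `(X, Y)`, as
an iterated integral, with the convention `e^{-i(ξX + η·Y)}`. -/
noncomputable def boundarySymbol [MeasurableSpace E] [BorelSpace E] [FiniteDimensional ℝ E]
    (F : ℝ) (α : E → ℝ) (ξ : ℝ) (η : E) : ℂ :=
  ∫ X : ℝ, ∫ Y : E, Complex.exp (-(Complex.I * (ξ * X + (⟪η, Y⟫ : ℝ)))) *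
    (boundaryKernel F α X Y : ℝ)

lemma boundaryKernel_eq_add (F : ℝ) (α : E → ℝ) (X : ℝ) (Y : E) :
    boundaryKernel F α X Y = halfKernel F α X Y + halfKernel F α X (-Y) := by
  have hodd (a : ℝ) : (-X + a * ‖Y‖ ^ 2) / ‖Y‖ = -((X - a * ‖Y‖ ^ 2) / ‖Y‖) := by ring
  simp only [boundaryKernel, halfKernel, gaussianCutoff, hodd, neg_sq, norm_neg, smul_neg, mul_add]

lemma halfKernel_nonneg (F : ℝ) (α : E → ℝ) (X : ℝ) (Y : E) : 0 ≤ halfKernel F α X Y :=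
  mul_nonneg (by positivity) (gaussianCutoff_pos _ _ _).le

lemma partialSymbol_nonneg (F : ℝ) (α : E → ℝ) (ξ : ℝ) (Y : E) : 0 ≤ partialSymbol F α ξ Y := by
  unfold partialSymbol
  positivity

variable {F : ℝ} {α : E → ℝ}

lemma halfKernel_eq {Y : E} (hY : Y ≠ 0) (hα : α (‖Y‖⁻¹ • Y) ≠ 0) (X : ℝ) :
    halfKernel F α X Y = (‖Y‖ ^ finrank ℝ E)⁻¹ * Real.exp (-(F * α (‖Y‖⁻¹ • Y) * ‖Y‖ ^ 2 / 2)) *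
      Real.exp (-(F / (2 * α (‖Y‖⁻¹ • Y) * ‖Y‖ ^ 2)) * X ^ 2) := by
  rw [mul_assoc, ← exp_mul_gaussianCutoff F X hα (norm_ne_zero_iff.2 hY), halfKernel]
  ring

lemma integrable_halfKernel_left (hF : 0 < F) {Y : E} (hY : Y ≠ 0)
    (hα : 0 < α (‖Y‖⁻¹ • Y)) : Integrable fun X ↦ halfKernel F α X Y := by
  simp only [halfKernel_eq hY hα.ne']
  exact (integrable_exp_neg_mul_sq (by positivity)).const_mul _

lemma integral_cexp_mul_halfKernel [FiniteDimensional ℝ E] (hF : 0 < F) {Y : E} (hY : Y ≠ 0)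
    (hα : 0 < α (‖Y‖⁻¹ • Y)) (ξ : ℝ) :
    ∫ X : ℝ, Complex.exp (-(Complex.I * (ξ * X : ℝ))) * (halfKernel F α X Y : ℂ) =
      (partialSymbol F α ξ Y : ℂ) := by
  have : Nontrivial E := ⟨Y, 0, hY⟩
  have hr : 0 < ‖Y‖ := norm_pos_iff.2 hY
  simp only [halfKernel_eq hY hα.ne', partialSymbol]
  generalize α (‖Y‖⁻¹ • Y) = a at hα ⊢
  generalize ‖Y‖ = r at hr ⊢
  have hsqrt : √(Real.pi / (F / (2 * a * r ^ 2))) = r * √(2 * Real.pi * a / F) := by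
    rw [show Real.pi / (F / (2 * a * r ^ 2)) = r ^ 2 * (2 * Real.pi * a / F) by field_simp,
      Real.sqrt_mul (sq_nonneg r), Real.sqrt_sq hr.le]
  have hpow : (r ^ (finrank ℝ E - 1))⁻¹ = (r ^ finrank ℝ E)⁻¹ * r := by
    rw [← pow_sub_one_mul (finrank_pos (R := ℝ) (M := E)).ne' r]
    field_simp
  have hexp : Real.exp (-(a * (ξ ^ 2 + F ^ 2) / (2 * F)) * r ^ 2) =
      Real.exp (-(F * a * r ^ 2 / 2)) * Real.exp (-(ξ ^ 2 / (4 * (F / (2 * a * r ^ 2))))) := by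
    rw [← Real.exp_add]
    congr 1
    field_simp
    ring
  simp only [Complex.ofReal_mul _ (Real.exp (-_ * _ ^ 2)), mul_left_comm (Complex.exp _)]
  rw [integral_const_mul, integral_cexp_mul_gaussian (by positivity), hsqrt, hpow, hexp]
  push_cast
  ring

lemma integral_cexp_mul_boundaryKernel_left [FiniteDimensional ℝ E] (hF : 0 < F)
    (hα : ∀ ω ∈ sphere (0 : E) 1, 0 < α ω) {Y : E} (hY : Y ≠ 0) (ξ : ℝ) (η : E) :
    ∫ X : ℝ, Complex.exp (-(Complex.I * (ξ * X + ⟪η, Y⟫ : ℝ))) * (boundaryKernel F α X Y : ℂ) =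
      Complex.exp (-(Complex.I * (⟪η, Y⟫ : ℝ))) *
        ((partialSymbol F α ξ Y + partialSymbol F α ξ (-Y) : ℝ) : ℂ) := by
  have hsplit (X : ℝ) :
      Complex.exp (-(Complex.I * (ξ * X + ⟪η, Y⟫ : ℝ))) * (boundaryKernel F α X Y : ℂ) =
        Complex.exp (-(Complex.I * (⟪η, Y⟫ : ℝ))) *
          (Complex.exp (-(Complex.I * (ξ * X : ℝ))) * (halfKernel F α X Y : ℂ) +
            Complex.exp (-(Complex.I * (ξ * X : ℝ))) * (halfKernel F α X (-Y) : ℂ)) := by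
    rw [← mul_add, ← mul_assoc, ← Complex.exp_add, boundaryKernel_eq_add]
    push_cast
    ring_nf
  have hα_dir := hα _ (inv_norm_smul_mem_sphere hY)
  have hα_neg := hα _ (inv_norm_smul_mem_sphere (neg_ne_zero.2 hY))
  have hint := integrable_halfKernel_left hF hY hα_dir
  have hint_neg := integrable_halfKernel_left hF (neg_ne_zero.2 hY) hα_neg
  simp only [hsplit]
  rw [integral_const_mul, integral_add (integrable_cexp_neg_I_mul_mul (by fun_prop) hint)
      (integrable_cexp_neg_I_mul_mul (by fun_prop) hint_neg),
    integral_cexp_mul_halfKernel hF hY hα_dir,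
    integral_cexp_mul_halfKernel hF (neg_ne_zero.2 hY) hα_neg, Complex.ofReal_add]

lemma integral_halfKernel_left [FiniteDimensional ℝ E] (hF : 0 < F) {Y : E} (hY : Y ≠ 0)
    (hα : 0 < α (‖Y‖⁻¹ • Y)) : ∫ X, halfKernel F α X Y = partialSymbol F α 0 Y := by
  have h := integral_cexp_mul_halfKernel hF hY hα 0
  simp only [zero_mul, Complex.ofReal_zero, mul_zero, neg_zero, Complex.exp_zero, one_mul] at h
  exact_mod_cast h

lemma pow_smul_cos_mul_partialSymbol_smul {r : ℝ} (hr : 0 < r) {ω : E} (hω : ω ∈ sphere (0 : E) 1)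
    (ξ t : ℝ) :
    r ^ (finrank ℝ E - 1) • (Real.cos (t * r) * partialSymbol F α ξ (r • ω)) =
      √(2 * Real.pi * α ω / F) *
        (Real.cos (t * r) * Real.exp (-(α ω * (ξ ^ 2 + F ^ 2) / (2 * F)) * r ^ 2)) := by
  have hω₁ : ‖ω‖ = 1 := by simpa using hω
  have hnorm : ‖r • ω‖ = r := by rw [norm_smul, hω₁, mul_one, Real.norm_of_nonneg hr.le]
  have hdir : r⁻¹ • r • ω = ω := inv_smul_smul₀ hr.ne' ω
  simp only [partialSymbol, hnorm, hdir, smul_eq_mul]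
  field_simp

lemma integral_Ioi_cos_mul_partialSymbol (hF : 0 < F) {ω : E} (hω : ω ∈ sphere (0 : E) 1)
    (hα : 0 < α ω) (ξ t : ℝ) :
    ∫ r in Ioi (0 : ℝ), r ^ (finrank ℝ E - 1) • (Real.cos (t * r) * partialSymbol F α ξ (r • ω)) =
      Real.pi / √(ξ ^ 2 + F ^ 2) *
        Real.exp (-(t ^ 2 / (2 * α ω * (ξ ^ 2 + F ^ 2) / F))) := by
  rw [setIntegral_congr_fun measurableSet_Ioi fun r hr ↦
    pow_smul_cos_mul_partialSymbol_smul (mem_Ioi.1 hr) hω ξ t, integral_const_mul,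
    integral_Ioi_cos_mul_gaussian (by positivity), ← mul_assoc]
  generalize α ω = a at hα ⊢
  congr 1
  · rw [← mul_div_assoc, ← Real.sqrt_mul (by positivity),
      show 2 * Real.pi * a / F * (Real.pi / (a * (ξ ^ 2 + F ^ 2) / (2 * F))) =
        (2 * Real.pi) ^ 2 / (ξ ^ 2 + F ^ 2) by field_simp,
      Real.sqrt_div (by positivity), Real.sqrt_sq (by positivity)]
    ring
  · congr 3
    ring

lemma integrableOn_Ioi_partialSymbol (hF : 0 < F) {ω : E} (hω : ω ∈ sphere (0 : E) 1)
    (hα : 0 < α ω) (ξ : ℝ) :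
    IntegrableOn (fun r : ℝ ↦ r ^ (finrank ℝ E - 1) • partialSymbol F α ξ (r • ω)) (Ioi 0) := by
  refine IntegrableOn.congr_fun (Integrable.integrableOn ((integrable_exp_neg_mul_sq
    (b := α ω * (ξ ^ 2 + F ^ 2) / (2 * F)) (by positivity)).const_mul √(2 * Real.pi * α ω / F)))
    (fun r hr ↦ ?_) measurableSet_Ioi
  simpa using (pow_smul_cos_mul_partialSymbol_smul (F := F) (α := α) hr hω ξ 0).symm

variable [MeasurableSpace E] [BorelSpace E]

lemma measurable_uncurry_halfKernel [SecondCountableTopology E]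
    (hαm : Measurable ((sphere (0 : E) 1).domRestrict α)) :
    Measurable fun p : ℝ × E ↦ halfKernel F α p.1 p.2 := by
  obtain ⟨a, ha, haα⟩ : ∃ a : E → ℝ, Measurable a ∧ ∀ Y, a Y = α (‖Y‖⁻¹ • Y) :=
    ⟨_, measurable_comp_inv_norm_smul hαm, fun _ ↦ rfl⟩
  simp only [halfKernel, gaussianCutoff, ← haα]
  fun_prop

lemma measurable_partialSymbol (hαm : Measurable ((sphere (0 : E) 1).domRestrict α)) (ξ : ℝ) :
    Measurable fun Y ↦ partialSymbol F α ξ Y := by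
  obtain ⟨a, ha, haα⟩ : ∃ a : E → ℝ, Measurable a ∧ ∀ Y, a Y = α (‖Y‖⁻¹ • Y) :=
    ⟨_, measurable_comp_inv_norm_smul hαm, fun _ ↦ rfl⟩
  simp only [partialSymbol, ← haα]
  fun_prop

variable [FiniteDimensional ℝ E] [Nontrivial E] (hF : 0 < F)
  (hαm : Measurable ((sphere (0 : E) 1).domRestrict α)) (hα : ∀ ω ∈ sphere (0 : E) 1, 0 < α ω)
include hF hαm hα

lemma integrable_partialSymbol (ξ : ℝ) : Integrable (partialSymbol F α ξ) := by
  have hmeas := measurable_partialSymbol (F := F) hαm ξ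
  have hmeas_polar : AEStronglyMeasurable
      (fun p : sphere (0 : E) 1 × Ioi (0 : ℝ) ↦ partialSymbol F α ξ ((p.2 : ℝ) • (p.1 : E)))
      ((volume : Measure E).toSphere.prod (volumeIoiPow (finrank ℝ E - 1))) :=
    (hmeas.comp (by fun_prop)).aestronglyMeasurable
  have hradial (ω : sphere (0 : E) 1) :
      ∫ r : Ioi (0 : ℝ), ‖partialSymbol F α ξ ((r : ℝ) • (ω : E))‖
        ∂volumeIoiPow (finrank ℝ E - 1) = Real.pi / √(ξ ^ 2 + F ^ 2) := by
    have h := integral_Ioi_cos_mul_partialSymbol hF ω.2 (hα ω ω.2) ξ 0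
    rw [integral_volumeIoiPow _ fun r ↦ ‖partialSymbol F α ξ (r • (ω : E))‖]
    simpa [Real.norm_of_nonneg (partialSymbol_nonneg _ _ _ _)] using h
  rw [← integrable_polar_iff, integrable_prod_iff hmeas_polar]
  refine ⟨.of_forall fun ω ↦ ?_, ?_⟩
  · exact (integrable_volumeIoiPow_iff (f := fun r ↦ partialSymbol F α ξ (r • (ω : E)))).2
      (integrableOn_Ioi_partialSymbol hF ω.2 (hα ω ω.2) ξ)
  · simp only [hradial]
    exact integrable_const _

lemma integral_cos_inner_mul_partialSymbol (ξ : ℝ) (η : E) :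
    ∫ Y, Real.cos ⟪η, Y⟫ * partialSymbol F α ξ Y =
      Real.pi / √(ξ ^ 2 + F ^ 2) * ∫ ω : sphere (0 : E) 1,
        Real.exp (-(⟪η, (ω : E)⟫ ^ 2 / (2 * α ω * (ξ ^ 2 + F ^ 2) / F)))
          ∂(volume : Measure E).toSphere := by
  have hint : Integrable fun Y ↦ Real.cos ⟪η, Y⟫ * partialSymbol F α ξ Y :=
    (integrable_partialSymbol hF hαm hα ξ).bdd_mul (c := 1)
      (Measurable.aestronglyMeasurable (by fun_prop)) (.of_forall fun Y ↦ Real.abs_cos_le_one _)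
  rw [integral_eq_integral_polar, integral_prod _ ((integrable_polar_iff _).2 hint),
    ← integral_const_mul]
  congr 1 with ω
  rw [integral_volumeIoiPow _ fun r ↦
    Real.cos ⟪η, r • (ω : E)⟫ * partialSymbol F α ξ (r • (ω : E))]
  simp only [real_inner_smul_right, mul_comm _ ⟪η, (ω : E)⟫]
  exact integral_Ioi_cos_mul_partialSymbol hF ω.2 (hα ω ω.2) ξ _

lemma integrable_halfKernel : Integrable fun p : ℝ × E ↦ halfKernel F α p.1 p.2 := by
  have hne : ∀ᵐ Y : E, Y ≠ 0 := ae_iff.2 (by simp)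
  rw [Measure.volume_eq_prod,
    integrable_prod_iff' (measurable_uncurry_halfKernel hαm).aestronglyMeasurable]
  refine ⟨hne.mono fun Y hY ↦
    integrable_halfKernel_left hF hY (hα _ (inv_norm_smul_mem_sphere hY)), ?_⟩
  refine (integrable_partialSymbol hF hαm hα 0).congr (hne.mono fun Y hY ↦ ?_)
  simp only [Real.norm_of_nonneg (halfKernel_nonneg _ _ _ _)]
  exact (integral_halfKernel_left hF hY (hα _ (inv_norm_smul_mem_sphere hY))).symm

lemma integrable_boundaryKernel : Integrable fun p : ℝ × E ↦ boundaryKernel F α p.1 p.2 := by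
  simp only [boundaryKernel_eq_add]
  have hreflect : MeasurePreserving (fun p : ℝ × E ↦ (p.1, -p.2)) :=
    (MeasurePreserving.id volume).prod (measurePreserving_neg (volume : Measure E))
  have hint := integrable_halfKernel hF hαm hα
  exact hint.add (hreflect.integrable_comp_of_integrable hint)

lemma boundarySymbol_eq (ξ : ℝ) (η : E) :
    boundarySymbol F α ξ η =
      ((2 * Real.pi / √(ξ ^ 2 + F ^ 2) * ∫ ω : sphere (0 : E) 1,
        Real.exp (-(⟪η, (ω : E)⟫ ^ 2 / (2 * α ω * (ξ ^ 2 + F ^ 2) / F)))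
          ∂(volume : Measure E).toSphere : ℝ) : ℂ) := by
  have hne : ∀ᵐ Y : E, Y ≠ 0 := ae_iff.2 (by simp)
  have hint := integrable_cexp_neg_I_mul_mul (θ := fun p : ℝ × E ↦ ξ * p.1 + ⟪η, p.2⟫)
    (by fun_prop) (integrable_boundaryKernel hF hαm hα)
  have hswap : boundarySymbol F α ξ η = ∫ Y : E, ∫ X : ℝ,
      Complex.exp (-(Complex.I * (ξ * X + ⟪η, Y⟫ : ℝ))) * (boundaryKernel F α X Y : ℂ) := by
    rw [← integral_integral_swap hint]
    simp [boundarySymbol]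
  rw [hswap, integral_congr_ae
      (hne.mono fun Y hY ↦ integral_cexp_mul_boundaryKernel_left hF hα hY ξ η),
    integral_cexp_neg_I_mul_mul_add_comp_neg (by fun_prop) (fun Y ↦ inner_neg_right η Y)
      (integrable_partialSymbol hF hαm hα ξ), integral_cos_inner_mul_partialSymbol hF hαm hα]
  congr 1
  ring

end Kernel

lemma rpow_one_sub_natCast {r : ℝ} (hr : 0 ≤ r) {n : ℕ} (hn : 1 ≤ n) :
    r ^ ((1 : ℝ) - n) = (r ^ (n - 1))⁻¹ := by
  rw [← Real.rpow_natCast, ← Real.rpow_neg hr, Nat.cast_sub hn, Nat.cast_one, neg_sub]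

theorem stmt15_general {E : Type*} [NormedAddCommGroup E] [InnerProductSpace ℝ E]
    [FiniteDimensional ℝ E] [MeasurableSpace E] [BorelSpace E] (hE : 2 ≤ finrank ℝ E) {F c₁ : ℝ}
    (hF : 0 < F) (hc₁ : 0 < c₁) {α : E → ℝ} (hαm : Measurable ((sphere (0 : E) 1).domRestrict α))
    (hα : ∀ ω ∈ sphere (0 : E) 1, c₁ ≤ α ω) :
    Integrable (fun p : ℝ × E ↦ boundaryKernel F α p.1 p.2) ∧
    ∃ c' : ℝ, 0 < c' ∧ ∀ (ξ : ℝ) (η : E), (boundarySymbol F α ξ η).im = 0 ∧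
      c' / √(1 + ξ ^ 2 + ‖η‖ ^ 2) ≤ (boundarySymbol F α ξ η).re := by
  have : Nontrivial E := nontrivial_of_finrank_pos (R := ℝ) (by lia)
  have hα₀ : ∀ ω ∈ sphere (0 : E) 1, 0 < α ω := fun ω hω ↦ hc₁.trans_le (hα ω hω)
  obtain ⟨c', hc', hlower⟩ :=
    exists_div_sqrt_le_mul_integral_toSphere hE hF hc₁ hαm fun ω ↦ hα ω ω.2
  refine ⟨integrable_boundaryKernel hF hαm hα₀, c', hc', fun ξ η ↦ ?_⟩
  rw [boundarySymbol_eq hF hαm hα₀]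
  exact ⟨Complex.ofReal_im _, hlower ξ η⟩

/-- Ellipticity of the boundary principal symbol of the conjugated normal
operator `A_F` with Gaussian cutoff: the boundary kernel `K̃` is integrable, its `(X,Y)`-Fourier
transform is real and positive, and it is bounded below by `c'/√(1 + ξ² + |η|²)`. -/
theorem stmt15 (n : ℕ) (hn : 3 ≤ n) (F c₁ c₂ : ℝ) (hF : 0 < F) (hc₁ : 0 < c₁)
    (σ : Measure ↥(Metric.sphere (0 : EuclideanSpace ℝ (Fin (n - 1))) 1))
    (hσ : ∀ f : EuclideanSpace ℝ (Fin (n - 1)) → ℝ, Integrable f →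
      ∫ Y, f Y = ∫ r in Set.Ioi (0 : ℝ),
        (∫ ω : ↥(Metric.sphere (0 : EuclideanSpace ℝ (Fin (n - 1))) 1),
          f (r • (ω : EuclideanSpace ℝ (Fin (n - 1)))) ∂σ) * r ^ (n - 2))
    (α : EuclideanSpace ℝ (Fin (n - 1)) → ℝ)
    (hαcont : ContinuousOn α (Metric.sphere (0 : EuclideanSpace ℝ (Fin (n - 1))) 1))
    (hα : ∀ ω ∈ Metric.sphere (0 : EuclideanSpace ℝ (Fin (n - 1))) 1, c₁ ≤ α ω ∧ α ω ≤ c₂)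
    (K : ℝ → EuclideanSpace ℝ (Fin (n - 1)) → ℝ)
    (hK : ∀ (X : ℝ) (Y : EuclideanSpace ℝ (Fin (n - 1))),
      K X Y = Real.exp (-(F * X)) * ‖Y‖ ^ ((1 : ℝ) - n) *
        (Real.exp (-(F * ((X - α (‖Y‖⁻¹ • Y) * ‖Y‖ ^ 2) / ‖Y‖) ^ 2 / (2 * α (‖Y‖⁻¹ • Y))))
          + Real.exp (-(F * ((-X + α (-(‖Y‖⁻¹ • Y)) * ‖Y‖ ^ 2) / ‖Y‖) ^ 2 /
              (2 * α (-(‖Y‖⁻¹ • Y))))))) :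
    Integrable (fun p : ℝ × EuclideanSpace ℝ (Fin (n - 1)) => K p.1 p.2) ∧
    ∃ c' : ℝ, 0 < c' ∧ ∀ (ξ : ℝ) (η : EuclideanSpace ℝ (Fin (n - 1))),
      (∫ X : ℝ, ∫ Y : EuclideanSpace ℝ (Fin (n - 1)),
          Complex.exp (-(Complex.I * (ξ * X + (⟪η, Y⟫ : ℝ)))) * (K X Y : ℝ)).im = 0 ∧
      c' / Real.sqrt (1 + ξ ^ 2 + ‖η‖ ^ 2) ≤
        (∫ X : ℝ, ∫ Y : EuclideanSpace ℝ (Fin (n - 1)),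
          Complex.exp (-(Complex.I * (ξ * X + (⟪η, Y⟫ : ℝ)))) * (K X Y : ℝ)).re := by
  obtain rfl : K = boundaryKernel F α := by
    ext X Y
    rw [hK, boundaryKernel, rpow_one_sub_natCast (norm_nonneg Y) (by lia),
      finrank_euclideanSpace_fin]
    rfl
  exact stmt15_general (by rw [finrank_euclideanSpace_fin]; lia) hF hc₁
    hαcont.domRestrict.measurable fun ω hω ↦ (hα ω hω).1
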